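/- arXiv:1809.10439 — 3 statements merged into one kernel-verified Lean document; each statement's English description precedes it below -/
import Mathlib

section
/- Let b ∈ ℂ with −1/2 ≤ Re b < 0. For n ≥ 1 let P_n be the unique polynomial (of degree n) with P_n(z) = (z − b + s)^n + (z − b − s)^n − (−b)^n for all z (s² = z² − 1). Define g(t) = b(1 − t²) + t·(1 − b²(1 − t²))^{1/2} for t ∈ [−1, 1], where (·)^{1/2} is the principal complex square root (for such b the argument 1 − b²(1 − t²) never lies on (−∞, 0]). Then for every bounded continuous f : ℂ → ℝ, (1/n) Σ f(z) over the roots z of P_n counted with multiplicity converges, as n → ∞, to (1/π) ∫_{−1}^{1} f(g(t)) dt/√(1 − t²); i.e., the normalized zero counting measures of the Faber polynomials converge weak-* to the push-forward (U^{−1})_*(μ_{[−1,1]}) of the arcsine measure under the inverse of U. -/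
open Filter

namespace Faber

lemma sqrt_sq (w : ℂ) : (w ^ ((1:ℂ)/2)) ^ 2 = w := by
  simp

lemma sqrt_re_pos {w : ℂ} (hw : w ∈ Complex.slitPlane) : 0 < (w ^ ((1:ℂ)/2)).re := by
  have h : ((1:ℂ)/2) = (((1/2 : ℝ)) : ℂ) := by push_cast; rfl
  rw [h, Complex.cpow_ofReal_re]
  have h0 : w ≠ 0 := Complex.slitPlane_ne_zero hw
  have h1 : w.arg ≠ Real.pi := (Complex.mem_slitPlane_iff_arg.1 hw).1
  have h2 := Complex.neg_pi_lt_arg w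
  have h3 := Complex.arg_le_pi w
  have h4 : w.arg < Real.pi := lt_of_le_of_ne h3 h1
  have := norm_pos_iff.2 h0
  have : 0 < Real.cos (w.arg * (1/2)) := Real.cos_pos_of_mem_Ioo ⟨by linarith, by linarith⟩
  positivity

/-- the radicand -/
noncomputable def A (b θ : ℂ) : ℂ := 1 - b ^ 2 * (1 - Complex.cos θ ^ 2)

noncomputable def dd (b θ : ℂ) : ℂ := -b * Complex.cos θ + A b θ ^ ((1:ℂ)/2)

noncomputable def G (b θ : ℂ) : ℂ := b + Complex.cos θ * dd b θ

lemma dd_sq (b θ : ℂ) : dd b θ ^ 2 = 1 + b ^ 2 - 2 * b * G b θ := by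
  have h := sqrt_sq (A b θ)
  unfold G dd
  generalize A b θ ^ ((1:ℂ)/2) = r at *
  unfold A at h
  linear_combination h

lemma A_mem {b : ℂ} (hb₁ : -1/2 ≤ b.re) (hb₂ : b.re < 0) (θ : ℝ) :
    A b θ ∈ Complex.slitPlane := by
  have h1 : A b θ = 1 - b ^ 2 * ((Real.sin θ ^ 2 : ℝ) : ℂ) := by
    unfold A
    have := Complex.sin_sq_add_cos_sq (θ : ℂ)
    push_cast
    linear_combination (b^2) * this
  have h2 : Real.sin θ ^ 2 ≤ 1 := Real.sin_sq_le_one θ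
  have h3 : 0 ≤ Real.sin θ ^ 2 := by positivity
  rw [h1]
  generalize Real.sin θ ^ 2 = c at *
  rw [Complex.mem_slitPlane_iff]
  by_cases hq : b.im = 0
  · left
    simp [pow_two, hq]
    nlinarith
  · rcases h3.eq_or_lt with h | h
    · left; simp [← h]
    · right
      simp [pow_two]
      constructor
      · intro h; have : b.re * b.im = 0 := by linarith
        rcases mul_eq_zero.1 this with h | h
        · linarith
        · exact hq h
      · exact h.ne'

lemma dd_re_pos {b : ℂ} (hb₁ : -1/2 ≤ b.re) (hb₂ : b.re < 0) (θ : ℝ) :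
    0 < (dd b θ).re := by
  have h1 := A_mem hb₁ hb₂ θ
  have h2 := sqrt_re_pos h1
  have h3 := sqrt_sq (A b θ)
  unfold dd
  generalize A b θ ^ ((1:ℂ)/2) = r at *
  have hA : A b θ = 1 - b ^ 2 * ((Real.sin θ ^ 2 : ℝ) : ℂ) := by
    unfold A
    have := Complex.sin_sq_add_cos_sq (θ : ℂ)
    push_cast
    linear_combination (b^2) * this
  have hs := Real.sin_sq_add_cos_sq θ
  rw [hA] at h3
  have h4 := congrArg Complex.re h3
  rw [← Complex.ofReal_cos]
  simp [pow_two, -Complex.ofReal_sin] at h4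
  simp [-Complex.ofReal_cos]
  generalize Real.sin θ = s at *
  generalize Real.cos θ = c at *
  have h5 : (b.re * c)^2 < r.re^2 := by nlinarith [sq_nonneg r.im, sq_nonneg (b.im * s), sq_nonneg (b.re), sq_nonneg s]
  have := abs_lt_of_sq_lt_sq h5 h2.le
  have := (abs_lt.1 this).2
  linarith

lemma norm_lt {b : ℂ} (hb₁ : -1/2 ≤ b.re) (hb₂ : b.re < 0) (θ : ℝ) (h0 : 0 < θ)
    (h1 : θ < Real.pi) : ‖b‖ < ‖dd b θ‖ := by
  by_contra hcon
  push Not at hcon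
  have hd := dd_re_pos hb₁ hb₂ θ
  have hsq := dd_sq b θ
  unfold G at hsq
  generalize dd b θ = d at *
  have hsin := Real.sin_pos_of_pos_of_lt_pi h0 h1
  have hs := Complex.sin_sq_add_cos_sq (θ : ℂ)
  have hsr := Real.sin_sq_add_cos_sq θ
  rw [← Complex.ofReal_cos] at hsq hs
  rw [← Complex.ofReal_sin] at hs
  generalize Real.sin θ = s at *
  generalize Real.cos θ = c at *
  have hprod : (d * (c + s * Complex.I) + b) * (d * (c - s * Complex.I) + b) = 1 := by
    linear_combination (d^2) * hs + hsq - d^2 * s^2 * Complex.I_sq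
  have hn : Complex.normSq d ≤ Complex.normSq b := by
    rw [Complex.normSq_eq_norm_sq, Complex.normSq_eq_norm_sq]
    gcongr
  have key : ∀ t : ℝ, c^2 + t^2 = 1 → Complex.normSq (d * (c + t * Complex.I)) ≤ Complex.normSq b := by
    intro t ht
    rw [map_mul]
    have : Complex.normSq (c + t * Complex.I) = 1 := by
      rw [Complex.normSq_add_mul_I, ht]
    rw [this]; linarith
  have k1 := key s (by linarith)
  have k2 := key (-s) (by linarith)
  obtain ⟨z, hz⟩ : ∃ z, z = d * (c + s * Complex.I) + b := ⟨_, rfl⟩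
  obtain ⟨z', hz'⟩ : ∃ z, z = d * (c - s * Complex.I) + b := ⟨_, rfl⟩
  have e1 : d * (c + s * Complex.I) = z - b := by rw [hz]; ring
  have e2 : d * (c + (-s : ℝ) * Complex.I) = z' - b := by rw [hz']; push_cast; ring
  rw [e1] at k1
  rw [e2] at k2
  rw [← hz, ← hz'] at hprod
  have r1 := congrArg Complex.re hprod
  have r2 := congrArg Complex.im hprod
  simp [Complex.normSq_apply] at r1 r2 k1 k2
  have e3 : 2 * d * s * Complex.I = z - z' := by rw [hz, hz']; ring
  have hN : 1 ≤ 2 * (b.re * z.re - b.im * z.im) := by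
    have a1 : z'.re * (z.re^2+z.im^2) = z.re := by linear_combination z.re * r1 + z.im * r2
    have a2 : z'.im * (z.re^2+z.im^2) = -z.im := by linear_combination -z.im * r1 + z.re * r2
    have a3 : (z'.re^2+z'.im^2) * (z.re^2+z.im^2) = 1 := by
      linear_combination z'.re * a1 + z'.im * a2 + r1
    have k3 : (z'.re^2+z'.im^2) ≤ 2 * (b.re * z'.re + b.im * z'.im) := by nlinarith
    have := mul_le_mul_of_nonneg_right k3 (by positivity : 0 ≤ z.re^2+z.im^2)
    rw [a3] at this
    have a4 : 2 * (b.re * z'.re + b.im * z'.im) * (z.re ^ 2 + z.im ^ 2)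
      = 2 * (b.re * z.re - b.im * z.im) := by
      linear_combination 2 * b.re * a1 + 2 * b.im * a2
    linarith
  have hS : 1 + z.re^2 + z.im^2 ≤ 4 * (b.re * z.re) := by linarith
  clear hN key k1 k2 hsq
  have hpx : 0 < b.re * z.re := by linarith [sq_nonneg z.re, sq_nonneg z.im]
  have hx : z.re < 0 := by
    by_contra hx
    have := mul_nonpos_of_nonpos_of_nonneg hb₂.le (not_lt.1 hx)
    linarith
  have hx1 : (b.re + 1/2) * z.re ≤ 0 := mul_nonpos_of_nonneg_of_nonpos (by linarith) hx.le
  have hx2 : (1+z.re)^2 + z.im^2 ≤ 0 := by linarith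
  have hx3 : z.re = -1 := by
    have : (1+z.re)^2 = 0 := by linarith [sq_nonneg (1+z.re), sq_nonneg z.im]
    have := pow_eq_zero_iff (two_ne_zero) |>.1 this
    linarith
  have hx4 : z.im = 0 := by
    have : (z.im)^2 = 0 := by linarith [sq_nonneg (1+z.re), sq_nonneg z.im]
    exact pow_eq_zero_iff (two_ne_zero) |>.1 this
  rw [hx3, hx4] at r1 r2
  have : z = z' := by apply Complex.ext <;> linarith
  rw [this, sub_self] at e3
  simp [hsin.ne'] at e3
  rw [e3] at hd
  simp at hd

def Om (b : ℂ) : Set ℂ := {θ | (0 < θ.re ∧ θ.re < Real.pi) ∧ A b θ ∈ Complex.slitPlane ∧ 0 < (dd b θ).re ∧ ‖b‖ < ‖dd b θ‖}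

lemma dd_diff {b θ : ℂ} (h : A b θ ∈ Complex.slitPlane) : DifferentiableAt ℂ (dd b) θ := by
  unfold dd
  refine DifferentiableAt.add (by fun_prop) (DifferentiableAt.cpow_const ?_ h)
  unfold A
  fun_prop

lemma G_cont {b θ : ℂ} (h : A b θ ∈ Complex.slitPlane) : ContinuousAt (G b) θ := by
  have := (dd_diff h).continuousAt
  unfold G
  fun_prop

lemma Om_nhds {b θ : ℂ} (h : θ ∈ Om b) : Om b ∈ nhds θ := by
  obtain ⟨⟨h1, h2⟩, h3, h4, h5⟩ := h
  have hc := (dd_diff h3).continuousAt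
  have hA : Continuous (A b) := by unfold A; fun_prop
  have i1 := Complex.continuous_re.continuousAt.eventually (lt_mem_nhds h1)
  have i2 := Complex.continuous_re.continuousAt.eventually (gt_mem_nhds h2)
  have i3 := hA.continuousAt.eventually (Complex.isOpen_slitPlane.mem_nhds h3)
  have i4 := (Complex.continuous_re.continuousAt.comp hc).eventually (lt_mem_nhds h4)
  have i5 := hc.norm.eventually (lt_mem_nhds h5)
  filter_upwards [i1, i2, i3, i4, i5] with x a1 a2 a3 a4 a5
  exact ⟨⟨a1, a2⟩, a3, a4, a5⟩

lemma inj {b x y : ℂ} (hx : x ∈ Om b) (hy : y ∈ Om b) (h : G b x = G b y) : x = y := by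
  obtain ⟨⟨h1, h2⟩, h3, h4, h5⟩ := hx
  obtain ⟨⟨h1', h2'⟩, h3', h4', h5'⟩ := hy
  have e : dd b x ^ 2 = dd b y ^ 2 := by rw [dd_sq, dd_sq, h]
  have e : dd b x = dd b y := by
    rcases sq_eq_sq_iff_eq_or_eq_neg.1 e with e | e
    · exact e
    · rw [e] at h4; simp at h4; linarith
  have hne : dd b y ≠ 0 := by intro h; rw [h] at h4'; simp at h4'
  unfold G at h
  rw [e] at h
  have hc : Complex.cos x = Complex.cos y := mul_right_cancel₀ hne (add_left_cancel h)
  obtain ⟨k, hk⟩ := Complex.cos_eq_cos_iff.1 hc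
  have hpi := Real.pi_pos
  rcases hk with hk | hk
  · have := congrArg Complex.re hk
    simp at this
    have k1 : (k:ℝ) < 1 := by nlinarith
    have k2 : (-1:ℝ) < k := by nlinarith
    have : k = 0 := by
      have : k < 1 := by exact_mod_cast k1
      have : -1 < k := by exact_mod_cast k2
      omega
    simp [this] at hk
    exact hk.symm
  · have := congrArg Complex.re hk
    simp at this
    have k1 : (k:ℝ) < 1 := by nlinarith
    have k2 : (0:ℝ) < k := by nlinarith
    have : k < 1 := by exact_mod_cast k1
    have : 0 < k := by exact_mod_cast k2
    omega

lemma eval_eq {b : ℂ} {p : Polynomial ℂ} {n : ℕ}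
    (hp : ∀ z s : ℂ, s ^ 2 = z ^ 2 - 1 →
        p.eval z = (z - b + s) ^ n + (z - b - s) ^ n - (-b) ^ n) (θ : ℂ) (hd : dd b θ ≠ 0) :
    p.eval (G b θ) = dd b θ ^ n * (2 * Complex.cos (n * θ) - (-b / dd b θ) ^ n) := by
  have hs := Complex.sin_sq_add_cos_sq θ
  have hsq := dd_sq b θ
  rw [hp _ (dd b θ * Complex.sin θ * Complex.I)]
  · have e1 : G b θ - b + dd b θ * Complex.sin θ * Complex.I = dd b θ * Complex.exp (θ * Complex.I) := by
      rw [Complex.exp_mul_I]; unfold G; ring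
    have e2 : G b θ - b - dd b θ * Complex.sin θ * Complex.I = dd b θ * Complex.exp (-θ * Complex.I) := by
      rw [Complex.exp_mul_I]; unfold G; simp; ring
    rw [e1, e2, mul_pow, mul_pow, ← Complex.exp_nat_mul, ← Complex.exp_nat_mul, div_pow, Complex.two_cos]
    field_simp
  · have : G b θ = b + Complex.cos θ * dd b θ := rfl
    rw [this] at hsq ⊢
    linear_combination (dd b θ * Complex.sin θ)^2 * Complex.I_sq - dd b θ ^2 * hs - hsq


lemma exists_zero {f : ℂ → ℂ} {z₀ : ℂ} {r ε : ℝ} (hf : AnalyticOnNhd ℂ f (Metric.closedBall z₀ r))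
    (hr : 0 < r) (hε : 0 < ε) (hs : ∀ z ∈ Metric.sphere z₀ r, ε ≤ ‖f z - f z₀‖)
    (h0 : ‖f z₀‖ < ε / 2) : ∃ z ∈ Metric.closedBall z₀ r, f z = 0 := by
  have h1 : DiffContOnCl ℂ f (Metric.ball z₀ r) :=
    ⟨hf.differentiableOn.mono Metric.ball_subset_closedBall, by
      rw [closure_ball z₀ hr.ne']; exact hf.continuousOn⟩
  have h2 : ∃ᶠ z in nhds z₀, f z ≠ f z₀ := by
    intro h
    have h' : f =ᶠ[nhds z₀] fun _ => f z₀ := by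
      filter_upwards [h] with z hz
      simpa using hz
    have := hf.eqOn_of_preconnected_of_eventuallyEq (g := fun _ => f z₀)
      (fun _ _ => analyticAt_const) (convex_closedBall z₀ r).isPreconnected
      (Metric.mem_closedBall_self hr.le) h'
    have hm : z₀ + r ∈ Metric.sphere z₀ r := by simp [abs_of_pos hr]
    have h3 := hs _ hm
    rw [this (Metric.sphere_subset_closedBall hm)] at h3
    simp at h3
    linarith
  have h3 := h1.ball_subset_image_closedBall hr hs h2
  have h4 : (0:ℂ) ∈ Metric.ball (f z₀) (ε/2) := by simpa using h0
  obtain ⟨z, hz, hz'⟩ := h3 h4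
  exact ⟨z, hz, hz'⟩

noncomputable def th (n k : ℕ) : ℝ := (k + 1/2) * Real.pi / n

lemma real_mem_Om {b : ℂ} (hb₁ : -1/2 ≤ b.re) (hb₂ : b.re < 0) {θ : ℝ} (h0 : 0 < θ)
    (h1 : θ < Real.pi) : (θ : ℂ) ∈ Om b :=
  ⟨⟨by simpa using h0, by simpa using h1⟩, A_mem hb₁ hb₂ θ, dd_re_pos hb₁ hb₂ θ, norm_lt hb₁ hb₂ θ h0 h1⟩

lemma Om_open (b : ℂ) : IsOpen (Om b) := isOpen_iff_mem_nhds.2 fun _ h => Om_nhds h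

lemma dd_ne {b x : ℂ} (h : x ∈ Om b) : dd b x ≠ 0 := by
  intro h'
  have := h.2.2.1
  rw [h'] at this
  simp at this

lemma sin_lower {w : ℂ} (hw : ‖w‖ = 1) : 4/5 ≤ ‖Complex.sin w‖ := by
  have h := Complex.sin_bound hw.le
  rw [hw] at h
  have h2 : ‖w‖ ≤ ‖Complex.sin w‖ + ‖Complex.sin w - (w - w^3/6)‖ + ‖w^3/6‖ := by
    calc ‖w‖ = ‖Complex.sin w - (Complex.sin w - (w - w^3/6)) + w^3/6‖ := by congr 1; ring
      _ ≤ _ := (norm_add_le _ _).trans (by gcongr; exact norm_sub_le _ _)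
  have h3 : ‖w^3/6‖ = 1/6 := by simp [hw]
  rw [h3, hw] at h2
  norm_num at h h2
  linarith

lemma cos_sphere (n k : ℕ) (hn : 1 ≤ n) (v : ℂ) :
    ‖Complex.cos (n * (th n k + v))‖ = ‖Complex.sin (n * v)‖ := by
  have hn' : (n:ℝ) ≠ 0 := by positivity
  have e : (n:ℂ) * (th n k + v) = ((k + 1/2) * Real.pi : ℝ) + n * v := by
    rw [mul_add]; congr 1
    rw [← Complex.ofReal_natCast, ← Complex.ofReal_mul]; congr 1
    unfold th; field_simp
  have hc : Real.cos ((k + 1/2) * Real.pi) = 0 := by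
    rw [Real.cos_eq_zero_iff]; exact ⟨k, by push_cast; ring⟩
  have hs : |Real.sin ((k + 1/2) * Real.pi)| = 1 := by
    have := Real.sin_sq_add_cos_sq ((k + 1/2) * Real.pi)
    rw [hc] at this
    have h2 : Real.sin ((k + 1/2) * Real.pi) ^ 2 = 1 ^ 2 := by linarith
    rw [sq_eq_sq_iff_abs_eq_abs, abs_one] at h2
    exact h2
  rw [e, Complex.cos_add, ← Complex.ofReal_cos, ← Complex.ofReal_sin, hc]
  simp only [Complex.ofReal_zero, zero_mul, zero_sub, norm_neg, norm_mul, Complex.norm_real, Real.norm_eq_abs, hs, one_mul]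

lemma roots_exist {b : ℂ} (hb₁ : -1/2 ≤ b.re) (hb₂ : b.re < 0)
    {P : ℕ → Polynomial ℂ}
    (hP : ∀ n, 1 ≤ n → (P n).degree = n ∧
      ∀ z s : ℂ, s ^ 2 = z ^ 2 - 1 →
        (P n).eval z = (z - b + s) ^ n + (z - b - s) ^ n - (-b) ^ n)
    {δ : ℝ} (hδ : 0 < δ) :
    ∀ᶠ n : ℕ in atTop, ∀ k : ℕ, th n k ∈ Set.Icc δ (Real.pi - δ) →
      ∃ τ : ℂ, ‖τ - th n k‖ ≤ 1 / n ∧ τ ∈ Om b ∧ (P n).eval (G b τ) = 0 := by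
  set K : Set ℂ := Complex.ofReal '' Set.Icc δ (Real.pi - δ) with hKdef
  have hK : IsCompact K := isCompact_Icc.image Complex.continuous_ofReal
  have hKO : K ⊆ Om b := by
    rintro _ ⟨t, ht, rfl⟩
    exact real_mem_Om hb₁ hb₂ (by linarith [ht.1]) (by linarith [ht.2])
  obtain ⟨r, hr, hrO⟩ := hK.exists_cthickening_subset_open (Om_open b) hKO
  have hK' : IsCompact (Metric.cthickening r K) := hK.cthickening
  have hcont : ContinuousOn (fun x => 1 - ‖b‖ / ‖dd b x‖) (Metric.cthickening r K) := by
    intro x hx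
    have hx := hrO hx
    have h1 := (dd_diff hx.2.1).continuousAt
    have h2 : ‖dd b x‖ ≠ 0 := norm_ne_zero_iff.2 (dd_ne hx)
    exact (ContinuousAt.sub continuousAt_const (ContinuousAt.div continuousAt_const h1.norm h2)).continuousWithinAt
  obtain ⟨a, ha, hq⟩ := hK'.exists_forall_le' hcont (a := 0) (by
    intro x hx
    have hx := hrO hx
    have h2 : 0 < ‖dd b x‖ := norm_pos_iff.2 (dd_ne hx)
    have := (div_lt_one h2).2 hx.2.2.2
    linarith)
  set q : ℝ := max (1 - a) 0 with hqdef
  have hq0 : 0 ≤ q := le_max_right _ _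
  have hq1 : q < 1 := max_lt (by linarith) one_pos
  have hqb : ∀ x ∈ Metric.cthickening r K, ‖-b / dd b x‖ ≤ q := by
    intro x hx
    have := hq x hx
    rw [norm_div, norm_neg]
    exact le_trans (by linarith) (le_max_left _ _)
  have t1 := (tendsto_pow_atTop_nhds_zero_of_lt_one hq0 hq1).eventually (gt_mem_nhds (show (0:ℝ) < 1/4 by norm_num))
  have t2 := (tendsto_one_div_atTop_nhds_zero_nat (𝕜 := ℝ)).eventually (gt_mem_nhds hr)
  filter_upwards [t1, t2, eventually_ge_atTop 1] with n h1 h2 h3 k hk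
  have hn : (0:ℝ) < n := by exact_mod_cast h3
  have hball : Metric.closedBall (th n k : ℂ) (1/n) ⊆ Metric.cthickening r K :=
    (Metric.closedBall_subset_closedBall h2.le).trans
      (Metric.closedBall_subset_cthickening (Set.mem_image_of_mem _ hk) r)
  have hsmall : ∀ x ∈ Metric.closedBall (th n k : ℂ) (1/n), ‖(-b / dd b x)^n‖ < 1/4 := by
    intro x hx
    rw [norm_pow]
    exact lt_of_le_of_lt (pow_le_pow_left₀ (norm_nonneg _) (hqb x (hball hx)) n) h1
  have hself : (th n k : ℂ) ∈ Metric.closedBall (th n k : ℂ) (1/n) := Metric.mem_closedBall_self (by positivity)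
  have hcen : Complex.cos (n * (th n k : ℂ)) = 0 := by
    have := cos_sphere n k h3 0
    simpa using this
  obtain ⟨τ, hτ, hz⟩ := exists_zero (f := fun x => 2 * Complex.cos (n * x) - (-b / dd b x) ^ n)
    (z₀ := (th n k : ℂ)) (r := 1/n) (ε := 1) (by
      have : DifferentiableOn ℂ (fun x => 2 * Complex.cos (n * x) - (-b / dd b x) ^ n) (Om b) := by
        intro x hx
        have h1 := (dd_diff hx.2.1)
        have h2 := dd_ne hx
        apply DifferentiableAt.differentiableWithinAt
        refine DifferentiableAt.sub (by fun_prop) (DifferentiableAt.pow (DifferentiableAt.div (by fun_prop) h1 h2) n)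
      exact (this.analyticOnNhd (Om_open b)).mono (hball.trans hrO)) (by positivity) one_pos (by
      intro z hz
      obtain ⟨v, rfl⟩ : ∃ v, z = th n k + v := ⟨z - th n k, by ring⟩
      have hv : ‖v‖ = 1/n := by simpa using hz
      have hnv : ‖(n:ℂ) * v‖ = 1 := by rw [norm_mul, hv]; simp; field_simp
      have b1 := cos_sphere n k h3 v
      have b2 := sin_lower hnv
      have b3 := hsmall _ hself
      have b4 := hsmall _ (Metric.sphere_subset_closedBall hz)
      simp only [hcen]
      generalize (-b / dd b (th n k)) ^ n = u at *
      generalize (-b / dd b (th n k + v)) ^ n = u' at *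
      generalize Complex.cos (n * (th n k + v)) = c at *
      have : ‖2 * c‖ ≤ ‖2 * c - u' - (2 * 0 - u)‖ + ‖u'‖ + ‖u‖ := by
        calc ‖2 * c‖ = ‖(2 * c - u' - (2 * 0 - u)) + u' - u‖ := by congr 1; ring
          _ ≤ _ := (norm_sub_le _ _).trans (by gcongr; exact norm_add_le _ _)
      rw [norm_mul] at this
      norm_num at this ⊢
      linarith) (by
      simp only [hcen]
      have b3 := hsmall _ hself
      simp only [mul_zero, zero_sub, norm_neg]
      linarith)
  have hτO := hrO (hball hτ)
  refine ⟨τ, by simpa [dist_eq_norm] using hτ, hτO, ?_⟩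
  rw [eval_eq (hP n h3).2 τ (dd_ne hτO), hz, mul_zero]

lemma riemann {F : ℝ → ℝ} (hF : Continuous F) :
    Tendsto (fun n : ℕ => (1 / (n:ℝ)) * ∑ k ∈ Finset.range n, F (th n k)) atTop
      (nhds ((1 / Real.pi) * ∫ t in (0:ℝ)..Real.pi, F t)) := by
  rw [Metric.tendsto_atTop']
  intro ε hε
  have hpi := Real.pi_pos
  have huc := isCompact_Icc.uniformContinuousOn_of_continuous (hF.continuousOn (s := Set.Icc 0 Real.pi))
  rw [Metric.uniformContinuousOn_iff] at huc
  obtain ⟨δ, hδ, h⟩ := huc (ε/2) (by positivity)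
  obtain ⟨N, hN⟩ := exists_nat_gt (Real.pi / δ)
  refine ⟨N, fun n hn => ?_⟩
  have hnN : (N:ℝ) < n := by exact_mod_cast hn
  have hn0 : (0:ℝ) < n := lt_of_le_of_lt (by positivity) hnN
  have hw : Real.pi / n < δ := by
    rw [div_lt_iff₀ hn0]; rw [div_lt_iff₀ hδ] at hN; nlinarith
  have hsum := intervalIntegral.sum_integral_adjacent_intervals (f := F) (μ := MeasureTheory.volume)
    (a := fun k : ℕ => (k:ℝ) * (Real.pi / n)) (n := n) (fun k _ => hF.intervalIntegrable _ _)
  have e0 : ((0:ℕ):ℝ) * (Real.pi / n) = 0 := by simp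
  have e1 : (n:ℝ) * (Real.pi / n) = Real.pi := by field_simp
  simp only [e0, e1] at hsum
  have hterm : ∀ k ∈ Finset.range n,
      ‖Real.pi / n * F (th n k) - ∫ t in ((k:ℝ) * (Real.pi / n))..(((k+1:ℕ):ℝ) * (Real.pi / n)), F t‖
        ≤ ε / 2 * (Real.pi / n) := by
    intro k hk
    have hk : ((k+1:ℕ):ℝ) ≤ n := by exact_mod_cast Finset.mem_range.1 hk
    have hwp : 0 < Real.pi / n := by positivity
    have hthe : th n k = (k + 1/2) * (Real.pi / n) := by unfold th; ring
    have hlen : (((k+1:ℕ):ℝ) * (Real.pi / n)) - ((k:ℝ) * (Real.pi / n)) = Real.pi / n := by push_cast; ring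
    have hkk : ((k+1:ℕ):ℝ) * (Real.pi / n) ≤ Real.pi := by
      calc _ ≤ (n:ℝ) * (Real.pi / n) := by gcongr
        _ = _ := e1
    have hk0 : 0 ≤ (k:ℝ) * (Real.pi / n) := by positivity
    have hc : Real.pi / n * F (th n k) = ∫ t in ((k:ℝ) * (Real.pi / n))..(((k+1:ℕ):ℝ) * (Real.pi / n)), F (th n k) := by
      rw [intervalIntegral.integral_const, hlen, smul_eq_mul]
    rw [hc, ← intervalIntegral.integral_sub (by simp) (hF.intervalIntegrable _ _)]
    have := intervalIntegral.norm_integral_le_of_norm_le_const (f := fun t => F (th n k) - F t) (C := ε/2)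
      (a := ((k:ℝ) * (Real.pi / n))) (b := (((k+1:ℕ):ℝ) * (Real.pi / n))) (by
        intro x hx
        rw [Set.uIoc_of_le (by linarith)] at hx
        push_cast at hx hkk
        have := h (th n k) ⟨by rw [hthe]; positivity, by rw [hthe]; nlinarith⟩ x ⟨by linarith [hx.1], by linarith [hx.2]⟩ (by
          rw [Real.dist_eq, abs_lt, hthe]
          constructor <;> nlinarith [hx.1, hx.2])
        rw [Real.dist_eq] at this
        exact this.le)
    rwa [hlen, abs_of_pos hwp] at this
  have htot := (norm_sum_le _ _).trans (Finset.sum_le_sum hterm)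
  rw [Finset.sum_sub_distrib, hsum, ← Finset.mul_sum] at htot
  simp only [Finset.sum_const, Finset.card_range, nsmul_eq_mul] at htot
  rw [Real.dist_eq]
  have e2 : (1 / (n:ℝ)) * ∑ k ∈ Finset.range n, F (th n k) - (1 / Real.pi) * ∫ t in (0:ℝ)..Real.pi, F t
    = (1 / Real.pi) * (Real.pi / n * ∑ k ∈ Finset.range n, F (th n k) - ∫ t in (0:ℝ)..Real.pi, F t) := by
    field_simp
  rw [e2, abs_mul, abs_of_pos (by positivity : 0 < 1 / Real.pi)]
  rw [Real.norm_eq_abs] at htot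
  calc _ ≤ (1 / Real.pi) * (n * (ε / 2 * (Real.pi / n))) := by gcongr
    _ = ε / 2 := by field_simp
    _ < ε := by linarith

lemma msum_le (f : BoundedContinuousFunction ℂ ℝ) (u : Multiset ℂ) :
    |(u.map (fun z => f z)).sum| ≤ u.card * ‖f‖ := by
  induction u using Multiset.induction with
  | empty => simp
  | cons a s ih =>
    simp only [Multiset.map_cons, Multiset.sum_cons, Multiset.card_cons]
    have := f.norm_coe_le_norm a
    rw [Real.norm_eq_abs] at this
    push_cast
    calc _ ≤ |f a| + |(s.map (fun z => f z)).sum| := abs_add_le _ _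
      _ ≤ _ := by linarith

lemma bad_card (n : ℕ) (hn : 1 ≤ n) {e : ℝ} (he : 0 < e) :
    (((Finset.range n).filter (fun k => ¬ (th n k ∈ Set.Icc (e * Real.pi) (Real.pi - e * Real.pi)))).card : ℝ)
      ≤ 2 * (e * n + 1) := by
  have hpi := Real.pi_pos
  have hn0 : (0:ℝ) < n := by exact_mod_cast hn
  set c := ⌈e * n⌉₊ with hc
  have hsub : (Finset.range n).filter (fun k => ¬ (th n k ∈ Set.Icc (e * Real.pi) (Real.pi - e * Real.pi)))
      ⊆ Finset.range c ∪ (Finset.range c).image (fun j => n - 1 - j) := by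
    intro k hk
    rw [Finset.mem_filter, Finset.mem_range] at hk
    obtain ⟨hk, hb⟩ := hk
    rw [Set.mem_Icc, not_and_or, not_le, not_le] at hb
    unfold th at hb
    rw [Finset.mem_union, Finset.mem_image]
    rcases hb with hb | hb
    · left
      rw [div_lt_iff₀ hn0] at hb
      have : ((k:ℝ) + 1/2) < e * n := by
        by_contra h
        nlinarith [mul_le_mul_of_nonneg_right (not_lt.1 h) hpi.le]
      rw [Finset.mem_range, hc, Nat.lt_ceil]
      linarith
    · right
      rw [lt_div_iff₀ hn0] at hb
      have : n - e * n < ((k:ℝ) + 1/2) := by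
        by_contra h
        nlinarith [mul_le_mul_of_nonneg_right (not_lt.1 h) hpi.le]
      refine ⟨n - 1 - k, ?_, by omega⟩
      rw [Finset.mem_range, hc, Nat.lt_ceil, Nat.sub_sub, Nat.cast_sub (by omega)]
      push_cast
      linarith
  have h1 := (Finset.card_le_card hsub).trans ((Finset.card_union_le _ _).trans
    (Nat.add_le_add_left Finset.card_image_le _))
  rw [Finset.card_range] at h1
  have h2 : (c:ℝ) < e * n + 1 := Nat.ceil_lt_add_one (by positivity)
  have h3 : (((Finset.range n).filter (fun k => ¬ (th n k ∈ Set.Icc (e * Real.pi) (Real.pi - e * Real.pi)))).card : ℝ) ≤ c + c := by exact_mod_cast h1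
  linarith

lemma close {b : ℂ} (hb₁ : -1/2 ≤ b.re) (hb₂ : b.re < 0)
    {P : ℕ → Polynomial ℂ}
    (hP : ∀ n, 1 ≤ n → (P n).degree = n ∧
      ∀ z s : ℂ, s ^ 2 = z ^ 2 - 1 →
        (P n).eval z = (z - b + s) ^ n + (z - b - s) ^ n - (-b) ^ n)
    (f : BoundedContinuousFunction ℂ ℝ) {e : ℝ} (he : 0 < e) :
    ∀ᶠ n : ℕ in atTop, |(1 / (n : ℝ)) * ((P n).roots.map (fun z => f z)).sum
      - (1 / (n:ℝ)) * ∑ k ∈ Finset.range n, f (G b (th n k))| ≤ e + 2 * (4 * e) * ‖f‖ := by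
  have hpi := Real.pi_pos
  have hroots := roots_exist hb₁ hb₂ hP (δ := e * Real.pi) (by positivity)
  have hK : IsCompact (Complex.ofReal '' Set.Icc (e * Real.pi) (Real.pi - e * Real.pi)) :=
    isCompact_Icc.image Complex.continuous_ofReal
  have huc := hK.uniformContinuousAt_of_continuousAt (fun x => f (G b x)) (by
    rintro _ ⟨t, ht, rfl⟩
    exact f.continuous.continuousAt.comp (G_cont (A_mem hb₁ hb₂ t))) (Metric.dist_mem_uniformity he)
  rw [Metric.mem_uniformity_dist] at huc
  obtain ⟨r, hr, huc⟩ := huc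
  have t2 := (tendsto_one_div_atTop_nhds_zero_nat (𝕜 := ℝ)).eventually (gt_mem_nhds hr)
  have t3 := (tendsto_one_div_atTop_nhds_zero_nat (𝕜 := ℝ)).eventually (gt_mem_nhds he)
  filter_upwards [hroots, t2, t3, eventually_ge_atTop 1] with n h1 h2 h2' h3
  have hn : (0:ℝ) < n := by exact_mod_cast h3
  have hbad := bad_card n h3 he
  set I := Set.Icc (e * Real.pi) (Real.pi - e * Real.pi) with hI
  classical
  set good := (Finset.range n).filter (fun k => th n k ∈ I) with hgood
  set bad := (Finset.range n).filter (fun k => ¬ (th n k ∈ I)) with hbaddef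
  have hcard : good.card + bad.card = n := by
    rw [hgood, hbaddef, Finset.card_filter_add_card_filter_not, Finset.card_range]
  have hbad' : (bad.card : ℝ) ≤ 4 * e * n := by
    have : 1 < e * n := by rwa [div_lt_iff₀ hn] at h2'
    linarith
  choose! τ hτ1 hτ2 hτ3 using h1
  have hmem : ∀ k ∈ good, th n k ∈ I := fun k hk => (Finset.mem_filter.1 hk).2
  have hinj : Set.InjOn (fun k => G b (τ k)) good := by
    intro k hk j hj hkj
    have hk := hmem k hk
    have hj := hmem j hj
    have heq := inj (hτ2 k hk) (hτ2 j hj) hkj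
    have a1 := hτ1 k hk
    have a2 := hτ1 j hj
    rw [heq] at a1
    have a3 : ‖((th n k - th n j : ℝ) : ℂ)‖ ≤ 1 / n + 1 / n := by
      calc _ = ‖(τ j - th n j) - (τ j - th n k)‖ := by push_cast; congr 1; ring
        _ ≤ _ := (norm_sub_le _ _).trans (add_le_add a2 a1)
    rw [Complex.norm_real, Real.norm_eq_abs] at a3
    have a4 : th n k - th n j = ((k:ℝ) - j) * Real.pi / n := by unfold th; ring
    rw [a4, abs_div, abs_mul, abs_of_pos hpi, abs_of_pos hn, ← add_div, div_le_div_iff_of_pos_right hn] at a3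
    have a5 : |(k:ℝ) - j| < 1 := by
      have := Real.pi_gt_three
      by_contra h
      nlinarith [not_lt.1 h]
    have a6 : |(k:ℤ) - j| < 1 := by exact_mod_cast a5
    rw [Int.abs_lt_one_iff] at a6
    omega
  have hP0 : P n ≠ 0 := by
    intro h; have := (hP n h3).1; rw [h] at this; simp at this
  have hrc : (P n).roots.card = n := by
    rw [IsAlgClosed.card_roots_eq_natDegree]
    exact Polynomial.natDegree_eq_of_degree_eq_some (hP n h3).1
  set T := good.image (fun k => G b (τ k)) with hT
  have hTle : T.val ≤ (P n).roots := by
    rw [Multiset.le_iff_subset T.nodup]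
    intro z hz
    rw [Finset.mem_val, hT, Finset.mem_image] at hz
    obtain ⟨k, hk, rfl⟩ := hz
    rw [Polynomial.mem_roots hP0]
    exact hτ3 k (hmem k hk)
  obtain ⟨u, hu⟩ := Multiset.le_iff_exists_add.1 hTle
  have hTc : T.card = good.card := Finset.card_image_of_injOn hinj
  have huc' : u.card = bad.card := by
    have := congrArg Multiset.card hu
    rw [hrc, Multiset.card_add, Finset.card_val, hTc] at this
    omega
  have hTsum : (T.val.map (fun z => f z)).sum = ∑ k ∈ good, f (G b (τ k)) := by
    have : (T.val.map (fun z => f z)).sum = ∑ z ∈ T, f z := rfl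
    rw [this, hT, Finset.sum_image hinj]
  have hu' := msum_le f u
  rw [huc'] at hu'
  have hsplit : ∑ k ∈ Finset.range n, f (G b (th n k)) = ∑ k ∈ good, f (G b (th n k)) + ∑ k ∈ bad, f (G b (th n k)) :=
    (Finset.sum_filter_add_sum_filter_not _ _ _).symm
  have hb : |∑ k ∈ bad, f (G b (th n k))| ≤ bad.card * ‖f‖ := by
    refine (Finset.abs_sum_le_sum_abs _ _).trans ?_
    rw [← nsmul_eq_mul]
    exact Finset.sum_le_card_nsmul _ _ _ (fun k _ => f.norm_coe_le_norm _)
  have hg : |∑ k ∈ good, f (G b (τ k)) - ∑ k ∈ good, f (G b (th n k))| ≤ n * e := by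
    rw [← Finset.sum_sub_distrib]
    refine (Finset.abs_sum_le_sum_abs _ _).trans ?_
    have : ∀ k ∈ good, |f (G b (τ k)) - f (G b (th n k))| ≤ e := by
      intro k hk
      have hk := hmem k hk
      have h5 : dist (th n k : ℂ) (τ k) < r := by
        rw [dist_comm, dist_eq_norm]; exact (hτ1 k hk).trans_lt h2
      have := huc h5 (Set.mem_image_of_mem _ hk)
      have this : dist (f (G b (th n k))) (f (G b (τ k))) < e := this
      rw [dist_comm, Real.dist_eq] at this
      exact this.le
    refine (Finset.sum_le_card_nsmul _ _ _ this).trans ?_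
    rw [nsmul_eq_mul]
    gcongr
    omega
  rw [hu, Multiset.map_add, Multiset.sum_add, hTsum, hsplit, ← mul_sub, abs_mul, abs_of_pos (by positivity : 0 < 1 / (n:ℝ))]
  have hM : (bad.card:ℝ) * ‖f‖ ≤ 4 * e * n * ‖f‖ := by gcongr
  have hfin : |∑ k ∈ good, f (G b (τ k)) + (u.map (fun z => f z)).sum -
      (∑ k ∈ good, f (G b (th n k)) + ∑ k ∈ bad, f (G b (th n k)))| ≤ n * (e + 2 * (4 * e) * ‖f‖) := by
    rw [abs_le] at *
    constructor <;> linarith [hg.1, hg.2, hb.1, hb.2, hu'.1, hu'.2]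
  calc _ ≤ 1 / (n:ℝ) * (n * (e + 2 * (4 * e) * ‖f‖)) := by gcongr
    _ = _ := by field_simp

end Faber



/-- Let `b ∈ ℂ` with `−1/2 ≤ Re b < 0`. For `n ≥ 1` let `P n` be the unique
polynomial of degree `n` with `P_n(z) = (z − b + s)ⁿ + (z − b − s)ⁿ − (−b)ⁿ` (`s² = z² − 1`).
With `g(t) = b(1 − t²) + t·(1 − b²(1 − t²))^{1/2}` (principal complex square root), for
every bounded continuous `f : ℂ → ℝ`, the averages `(1/n) Σ f(z)` over the roots of `P n`
(with multiplicity) converge to `(1/π) ∫_{−1}^1 f(g(t)) dt/√(1 − t²)`; i.e. the normalized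
zero counting measures converge weak-* to `(U⁻¹)_*(μ_{[−1,1]})`. -/
theorem stmt_17 (b : ℂ) (hb₁ : -1/2 ≤ b.re) (hb₂ : b.re < 0)
    (P : ℕ → Polynomial ℂ)
    (hP : ∀ n, 1 ≤ n → (P n).degree = n ∧
      ∀ z s : ℂ, s ^ 2 = z ^ 2 - 1 →
        (P n).eval z = (z - b + s) ^ n + (z - b - s) ^ n - (-b) ^ n)
    (g : ℝ → ℂ)
    (hg : ∀ t : ℝ, g t = b * (1 - (t : ℂ) ^ 2) +
      (t : ℂ) * (1 - b ^ 2 * (1 - (t : ℂ) ^ 2)) ^ ((1 : ℂ) / 2)) :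
    ∀ f : BoundedContinuousFunction ℂ ℝ,
      Tendsto (fun n : ℕ => (1 / (n : ℝ)) * ((P n).roots.map (fun z => f z)).sum) atTop
        (nhds ((1 / Real.pi) * ∫ t in (-1 : ℝ)..1, f (g t) / Real.sqrt (1 - t ^ 2))) := by

  intro f
  have hcont : Continuous (fun θ : ℝ => f (Faber.G b θ)) := by
    rw [continuous_iff_continuousAt]
    intro t
    exact f.continuous.continuousAt.comp
      (ContinuousAt.comp (f := Complex.ofReal) (g := Faber.G b)
        (Faber.G_cont (Faber.A_mem hb₁ hb₂ t)) Complex.continuous_ofReal.continuousAt)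
  have hR := Faber.riemann hcont
  have hint : (∫ t in (-1 : ℝ)..1, f (g t) / Real.sqrt (1 - t ^ 2))
      = ∫ t in (0:ℝ)..Real.pi, f (Faber.G b t) := by
    have h1 := Polynomial.Chebyshev.integral_measureT (fun t => f (g t))
    rw [Polynomial.Chebyshev.integral_measureT_eq_integral_cos] at h1
    have h2 : ∀ t : ℝ, g (Real.cos t) = Faber.G b t := by
      intro t
      rw [hg]
      unfold Faber.G Faber.dd Faber.A
      push_cast
      ring
    simp only [h2] at h1
    rw [h1]
    refine intervalIntegral.integral_congr fun x _ => ?_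
    simp only [Real.sqrt_inv, div_eq_mul_inv]
  rw [hint]
  refine tendsto_of_tendsto_of_dist hR ?_
  rw [Metric.tendsto_nhds]
  intro ε hε
  have hM : 0 ≤ ‖f‖ := norm_nonneg f
  have hden : 0 < 1 + 8 * ‖f‖ := by positivity
  have he : 0 < ε / 2 / (1 + 8 * ‖f‖) := by positivity
  filter_upwards [Faber.close hb₁ hb₂ hP f he] with n hn
  rw [Real.dist_eq, sub_zero, abs_of_nonneg dist_nonneg, dist_comm, Real.dist_eq]
  refine lt_of_le_of_lt hn ?_
  have : ε / 2 / (1 + 8 * ‖f‖) + 2 * (4 * (ε / 2 / (1 + 8 * ‖f‖))) * ‖f‖ = ε / 2 := by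
    field_simp
    ring
  rw [this]
  linarith
end

section
/- Let b ∈ ℂ with Re b < −1/2 (corresponding to R cos θ > 3/2). Set c = (b + 1/b)/2, 𝒜_b = 𝒜 ∩ {z : |z − c| ≥ |b|/2} (the portion of the arc 𝒜 from the intersection point i_b to the point 1), and L_b^+ = {z ∈ ℂ : ∃s ∈ ℂ, s² = z² − 1, |b − z − s| = |b| and |z − c| ≤ |b|/2}. Then the zeros of f_n accumulate on 𝒜_b ∪ L_b^+: for every ε > 0 there exists N such that for all n ≥ N, every zero of f_n lies within distance ε of 𝒜_b ∪ L_b^+. -/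
open Filter Topology in
lemma dom_aux (x y w : ℕ → ℂ) (X Y W : ℂ) (n : ℕ → ℕ) (hn : Tendsto n atTop atTop)
    (hx : Tendsto x atTop (𝓝 X)) (hy : Tendsto y atTop (𝓝 Y)) (hw : Tendsto w atTop (𝓝 W))
    (h : ∀ k, ‖x k‖ ^ n k ≤ ‖y k‖ ^ n k + ‖w k‖ ^ n k) : ‖X‖ ≤ max ‖Y‖ ‖W‖ := by
  by_contra hcon
  push Not at hcon
  have hX : 0 < ‖X‖ := lt_of_le_of_lt (le_max_of_le_left (norm_nonneg Y)) hcon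
  obtain ⟨m, hm1, hm2⟩ := exists_between hcon
  obtain ⟨p, hp1, hp2⟩ := exists_between hm2
  have hm0 : 0 < m := lt_of_le_of_lt (le_max_of_le_left (norm_nonneg Y)) hm1
  have hp0 : 0 < p := hm0.trans hp1
  have e1 : ∀ᶠ k in atTop, ‖y k‖ < m :=
    hy.norm.eventually_lt_const (lt_of_le_of_lt (le_max_left _ _) hm1)
  have e2 : ∀ᶠ k in atTop, ‖w k‖ < m :=
    hw.norm.eventually_lt_const (lt_of_le_of_lt (le_max_right _ _) hm1)
  have e3 : ∀ᶠ k in atTop, p < ‖x k‖ := hx.norm.eventually_const_lt hp2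
  have hq : Tendsto (fun k => (m / p) ^ n k) atTop (𝓝 0) :=
    (tendsto_pow_atTop_nhds_zero_of_lt_one (by positivity) ((div_lt_one hp0).2 hp1)).comp hn
  have e4 : ∀ᶠ k in atTop, (m / p) ^ n k < 1 / 2 := hq.eventually_lt_const (by norm_num)
  obtain ⟨k, h1, h2, h3, h4⟩ := (e1.and (e2.and (e3.and e4))).exists
  have a1 : ‖y k‖ ^ n k ≤ m ^ n k := pow_le_pow_left₀ (norm_nonneg _) h1.le _
  have a2 : ‖w k‖ ^ n k ≤ m ^ n k := pow_le_pow_left₀ (norm_nonneg _) h2.le _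
  have a3 : p ^ n k ≤ ‖x k‖ ^ n k := pow_le_pow_left₀ hp0.le h3.le _
  rw [div_pow, div_lt_iff₀ (by positivity)] at h4
  have := h k
  linarith

lemma bound_aux (b u v : ℂ) (n : ℕ) (hn : 2 ≤ n) (huv : (u + b) * (v + b) = 1)
    (h : ‖u‖ ^ n ≤ ‖v‖ ^ n + ‖b‖ ^ n) : ‖u‖ ≤ 2 * (‖b‖ + 1) := by
  by_contra hcon
  push Not at hcon
  have hb := norm_nonneg b
  have h1 : ‖u‖ ≤ ‖u + b‖ + ‖b‖ := by simpa using norm_sub_le (u + b) b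
  have h2 : ‖v‖ ≤ ‖v + b‖ + ‖b‖ := by simpa using norm_sub_le (v + b) b
  have h3 : ‖u + b‖ * ‖v + b‖ = 1 := by rw [← norm_mul, huv, norm_one]
  have h4 : ‖v + b‖ ≤ 1 := by nlinarith [norm_nonneg (v + b)]
  have a1 : ‖v‖ ^ n ≤ (‖u‖ / 2) ^ n := pow_le_pow_left₀ (norm_nonneg _) (by linarith) _
  have a2 : ‖b‖ ^ n ≤ (‖u‖ / 2) ^ n := pow_le_pow_left₀ (norm_nonneg _) (by linarith) _
  have a3 : (‖u‖ / 2) ^ n ≤ ‖u‖ ^ n * (1 / 4) := by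
    rw [div_eq_mul_one_div, mul_pow]
    gcongr
    calc (1 / 2 : ℝ) ^ n ≤ (1 / 2) ^ 2 := pow_le_pow_of_le_one (by norm_num) (by norm_num) hn
      _ = 1 / 4 := by norm_num
  have : 0 < ‖u‖ ^ n := by
    have : 0 < ‖u‖ := by linarith
    positivity
  linarith

lemma rho_aux (U V : ℂ) (h : ‖U‖ = ‖V‖) (h0 : 0 < ‖U‖) :
    ∃ ρ : ℝ, ρ ∈ Set.Icc (0 : ℝ) 1 ∧ (U + V) ^ 2 = 4 * (ρ : ℂ) * (U * V) := by
  refine ⟨‖U + V‖ ^ 2 / (4 * ‖U‖ ^ 2), ⟨by positivity, ?_⟩, ?_⟩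
  · rw [div_le_one (by positivity)]
    have := norm_add_le U V
    rw [← h] at this
    nlinarith [norm_nonneg (U + V)]
  · have hU : (‖U‖ : ℂ) ≠ 0 := by exact_mod_cast h0.ne'
    have e1 := Complex.mul_conj' (U + V)
    have e2 := Complex.mul_conj' U
    have e3 := Complex.mul_conj' V
    rw [map_add] at e1
    rw [← h] at e3
    push_cast
    field_simp
    rw [← e1]
    linear_combination (-U * V - V ^ 2) * e2 + (-U * V - U ^ 2) * e3

open Filter Topology in
theorem stmt_18 (b : ℂ) (hb : b.re < -1/2)
    (c : ℂ) (hc : c = (b + 1 / b) / 2)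
    (A : Set ℂ)
    (hA : A = {z : ℂ | ∃ ρ : ℝ, ρ ∈ Set.Icc (0 : ℝ) 1 ∧ ∃ s : ℂ,
      s ^ 2 = (ρ : ℂ) * (1 - b ^ 2 + b ^ 2 * (ρ : ℂ)) ∧ z = b * (1 - (ρ : ℂ)) + s})
    (Ab : Set ℂ)
    (hAb : Ab = A ∩ {z : ℂ | ‖b‖ / 2 ≤ ‖z - c‖})
    (Lb : Set ℂ)
    (hLb : Lb = {z : ℂ | ∃ s : ℂ, s ^ 2 = z ^ 2 - 1 ∧
      ‖b - z - s‖ = ‖b‖ ∧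
      ‖z - c‖ ≤ ‖b‖ / 2}) :
    ∀ ε > (0 : ℝ), ∃ N : ℕ, ∀ n : ℕ, N ≤ n →
      ∀ z : ℂ, (∀ s : ℂ, s ^ 2 = z ^ 2 - 1 →
          (z - b + s) ^ n + (z - b - s) ^ n - (-b) ^ n = 0) →
        ∃ w ∈ Ab ∪ Lb, dist z w ≤ ε := by
  intro ε hε
  by_contra hcon
  push Not at hcon
  have hb0 : b ≠ 0 := by
    rintro rfl
    norm_num at hb
  have hbn : 0 < ‖b‖ := norm_pos_iff.2 hb0
  choose n hn z hz hfar using fun N : ℕ => hcon (N + 2)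
  choose s hs using fun N : ℕ => IsAlgClosed.exists_pow_nat_eq (z N ^ 2 - 1) (n := 2) (by norm_num)
  obtain ⟨u, hu⟩ : ∃ u : ℕ → ℂ, ∀ k, u k = z k - b + s k := ⟨_, fun _ => rfl⟩
  obtain ⟨v, hv⟩ : ∃ v : ℕ → ℂ, ∀ k, v k = z k - b - s k := ⟨_, fun _ => rfl⟩
  have huv : ∀ k, (u k + b) * (v k + b) = 1 := fun k => by
    rw [hu, hv]; linear_combination -hs k
  have hf : ∀ k, u k ^ n k + v k ^ n k - (-b) ^ n k = 0 := fun k => by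
    rw [hu, hv]; exact hz k _ (hs k)
  have i1 : ∀ k, ‖u k‖ ^ n k ≤ ‖v k‖ ^ n k + ‖b‖ ^ n k := fun k => by
    have : u k ^ n k = (-b) ^ n k - v k ^ n k := by linear_combination hf k
    rw [← norm_pow, this, ← norm_neg b, ← norm_pow, ← norm_pow, add_comm]
    exact norm_sub_le _ _
  have i2 : ∀ k, ‖v k‖ ^ n k ≤ ‖u k‖ ^ n k + ‖b‖ ^ n k := fun k => by
    have : v k ^ n k = (-b) ^ n k - u k ^ n k := by linear_combination hf k
    rw [← norm_pow, this, ← norm_neg b, ← norm_pow, ← norm_pow, add_comm]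
    exact norm_sub_le _ _
  have i3 : ∀ k, ‖b‖ ^ n k ≤ ‖u k‖ ^ n k + ‖v k‖ ^ n k := fun k => by
    have : (-b) ^ n k = u k ^ n k + v k ^ n k := by linear_combination -hf k
    rw [← norm_neg b, ← norm_pow, this, ← norm_pow, ← norm_pow]
    exact norm_add_le _ _
  have hn2 : ∀ k, 2 ≤ n k := fun k => le_trans (by omega) (hn k)
  have b1 : ∀ k, ‖u k‖ ≤ 2 * (‖b‖ + 1) := fun k => bound_aux b _ _ _ (hn2 k) (huv k) (i1 k)
  have b2 : ∀ k, ‖v k‖ ≤ 2 * (‖b‖ + 1) := fun k =>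
    bound_aux b _ _ _ (hn2 k) (by rw [mul_comm]; exact huv k) (i2 k)
  obtain ⟨⟨U, V⟩, -, φ, hφ, hlim⟩ :=
    (isCompact_closedBall (0 : ℂ × ℂ) (2 * (‖b‖ + 1))).tendsto_subseq
      (x := fun k => (u k, v k)) (fun k => by
        rw [mem_closedBall_zero_iff]
        exact max_le (b1 k) (b2 k))
  have lU : Tendsto (fun k => u (φ k)) atTop (𝓝 U) := (continuous_fst.tendsto _).comp hlim
  have lV : Tendsto (fun k => v (φ k)) atTop (𝓝 V) := (continuous_snd.tendsto _).comp hlim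
  have lb : Tendsto (fun _ : ℕ => b) atTop (𝓝 b) := tendsto_const_nhds
  have ln : Tendsto (fun k => n (φ k)) atTop atTop :=
    tendsto_atTop_mono (fun k => by have := hn (φ k); have := hφ.id_le k; simp at this ⊢; omega)
      tendsto_id
  have j1 := dom_aux _ _ _ _ _ _ _ ln lU lV lb (fun k => i1 (φ k))
  have j2 := dom_aux _ _ _ _ _ _ _ ln lV lU lb (fun k => i2 (φ k))
  have j3 := dom_aux _ _ _ _ _ _ _ ln lb lU lV (fun k => i3 (φ k))
  have hUV : (U + b) * (V + b) = 1 :=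
    tendsto_nhds_unique ((lU.add lb).mul (lV.add lb))
      (by simp only [huv]; exact tendsto_const_nhds)
  obtain ⟨Z, hZ⟩ : ∃ Z, Z = b + (U + V) / 2 := ⟨_, rfl⟩
  have lZ : Tendsto (fun k => z (φ k)) atTop (𝓝 Z) := by
    have e : (fun k => z (φ k)) = fun k => b + (u (φ k) + v (φ k)) / 2 := by
      funext k; rw [hu, hv]; ring
    rw [e, hZ]
    exact lb.add ((lU.add lV).div_const 2)
  suffices hmem : Z ∈ Ab ∪ Lb by
    obtain ⟨k, hk⟩ := ((Metric.tendsto_nhds.1 lZ) ε hε).exists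
    exact absurd hk (not_lt.2 (hfar (φ k) Z hmem).le)
  have hprod : ‖U‖ * ‖V‖ = 2 * ‖b‖ * ‖Z - c‖ := by
    have : U * V = -(2 * b * (Z - c)) := by
      rw [hZ, hc]; field_simp; linear_combination hUV
    rw [← norm_mul, this, norm_neg]; simp
  rcases lt_trichotomy ‖U‖ ‖V‖ with h | h | h
  · right
    have hV : ‖V‖ = ‖b‖ := by
      apply le_antisymm
      · rcases le_max_iff.1 j2 with h' | h' <;> linarith
      · rcases le_max_iff.1 j3 with h' | h' <;> linarith
    rw [hLb]
    refine ⟨-(U - V) / 2, ?_, ?_, ?_⟩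
    · rw [hZ]; linear_combination -hUV
    · rw [show b - Z - -(U - V) / 2 = -V by rw [hZ]; ring, norm_neg, hV]
    · rw [hV] at hprod h
      nlinarith
  · left
    have hU : ‖b‖ ≤ ‖U‖ := by rcases le_max_iff.1 j3 with h' | h' <;> linarith
    obtain ⟨ρ, hρ, hr⟩ := rho_aux U V h (by linarith)
    rw [hAb, hA]
    refine ⟨⟨ρ, hρ, Z - b + b * ρ, ?_, by ring⟩, ?_⟩
    · rw [hZ]; linear_combination hr / 4 + ρ * hUV
    · rw [← h] at hprod
      show ‖b‖ / 2 ≤ ‖Z - c‖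
      nlinarith
  · right
    have hU : ‖U‖ = ‖b‖ := by
      apply le_antisymm
      · rcases le_max_iff.1 j1 with h' | h' <;> linarith
      · rcases le_max_iff.1 j3 with h' | h' <;> linarith
    rw [hLb]
    refine ⟨(U - V) / 2, ?_, ?_, ?_⟩
    · rw [hZ]; linear_combination -hUV
    · rw [show b - Z - (U - V) / 2 = -U by rw [hZ]; ring, norm_neg, hU]
    · rw [hU] at hprod h
      nlinarith
end

section
/- Let α ∈ (0, 1/4]. For each n ≥ 1, the function p_n(z) = (z + 2α + s)^n + (z + 2α − s)^n − (2α)^n, where s is either complex square root of z² − 1 (the value is independent of the choice), has exactly n zeros z_1, …, z_n; they are pairwise distinct and lie in [−1, 1], and they are Chebyshev quadrature nodes of order n for the measure dμ(x) = (1/π)·(1/√(1 − x²))·(1 + 2αx)/(1 + 4α² + 4αx) dx on [−1,1]: for every polynomial p of degree at most n, ∫_{−1}^{1} p(x) dμ(x) = (1/n) Σ_{j=1}^{n} p(z_j). -/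
open Polynomial

lemma polyA (a : ℂ) (k : ℕ) : ∃ P : ℂ[X], P.natDegree ≤ k ∧ (P.coeff k = if k = 0 then 2 else 2 ^ k) ∧
    ∀ z s : ℂ, s ^ 2 = z ^ 2 - 1 → P.eval z = (z + a + s) ^ k + (z + a - s) ^ k := by
  induction k using Nat.strong_induction_on with
  | _ k ih =>
    match k, ih with
    | 0, _ => exact ⟨C 2, by simp, by simp, fun z s _ => by simp; norm_num⟩
    | 1, _ =>
      refine ⟨C 2 * X + C (2 * a), by compute_degree, by simp [coeff_C], fun z s _ => by simp; ring⟩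
    | k + 2, ih =>
      obtain ⟨P, hP1, hP2, hP3⟩ := ih (k + 1) (by omega)
      obtain ⟨Q, hQ1, hQ2, hQ3⟩ := ih k (by omega)
      refine ⟨C 2 * (X * P) + C (2 * a) * P - C (2 * a) * (X * Q) - C (1 + a ^ 2) * Q, ?_, ?_, ?_⟩
      · rw [natDegree_le_iff_coeff_eq_zero]
        intro N hN
        obtain ⟨M, rfl⟩ : ∃ M, N = M + 1 := ⟨N - 1, by omega⟩
        simp only [coeff_sub, coeff_add, coeff_C_mul, coeff_X_mul]
        rw [coeff_eq_zero_of_natDegree_lt (p := P) (by omega), coeff_eq_zero_of_natDegree_lt (p := P) (by omega),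
          coeff_eq_zero_of_natDegree_lt (p := Q) (by omega), coeff_eq_zero_of_natDegree_lt (p := Q) (by omega)]
        simp
      · rw [show k + 2 = (k + 1) + 1 from rfl]
        simp only [coeff_sub, coeff_add, coeff_C_mul, coeff_X_mul]
        rw [hP2, coeff_eq_zero_of_natDegree_lt (p := P) (by omega),
          coeff_eq_zero_of_natDegree_lt (p := Q) (by omega), coeff_eq_zero_of_natDegree_lt (p := Q) (by omega)]
        simp; ring
      · intro z s hs
        simp only [eval_sub, eval_add, eval_mul, eval_C, eval_X, hP3 z s hs, hQ3 z s hs]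
        have h1 : (z + a + s) ^ 2 = 2 * (z + a) * (z + a + s) - (2 * a * z + (1 + a ^ 2)) := by
          linear_combination hs
        have h2 : (z + a - s) ^ 2 = 2 * (z + a) * (z + a - s) - (2 * a * z + (1 + a ^ 2)) := by
          linear_combination hs
        linear_combination -(z + a + s) ^ k * h1 - (z + a - s) ^ k * h2

lemma polyB (a : ℂ) (n : ℕ) (hn : 1 ≤ n) : ∃ P : ℂ[X], P.natDegree ≤ n ∧ P.coeff n = 2 ^ n ∧
    ∀ z s : ℂ, s ^ 2 = z ^ 2 - 1 → P.eval z = (z + a + s) ^ n + (z + a - s) ^ n - a ^ n := by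
  obtain ⟨P, h1, h2, h3⟩ := polyA a n
  refine ⟨P - C (a ^ n), ?_, ?_, fun z s hs => by simp [h3 z s hs]⟩
  · exact (natDegree_sub_C (p := P)).trans_le h1
  · rw [coeff_sub, h2, coeff_C, if_neg (by omega), if_neg (by omega), sub_zero]

lemma polyC (n : ℕ) (P : ℂ[X]) (h1 : P.natDegree ≤ n) (h2 : P.coeff n = 2 ^ n) (Z : Finset ℂ)
    (hZ : Z.card = n) (hr : ∀ z ∈ Z, P.eval z = 0) : P = C (2 ^ n) * ∏ z ∈ Z, (X - C z) := by
  have hne : (2 : ℂ) ^ n ≠ 0 := pow_ne_zero _ two_ne_zero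
  have hd : P.natDegree = n := natDegree_eq_of_le_of_coeff_ne_zero h1 (by rwa [h2])
  have hP0 : P ≠ 0 := by rintro rfl; simp at h2; exact hne h2.symm
  have hroots : P.roots = Z.val := by
    symm
    apply Multiset.eq_of_le_of_card_le
    · rw [Multiset.le_iff_subset Z.nodup]
      intro z hz
      rw [mem_roots hP0]; exact hr z hz
    · have := P.card_roots'
      rw [hd] at this; simpa [hZ] using this
  have := C_leadingCoeff_mul_prod_multiset_X_sub_C (p := P) (by rw [hroots, hd]; exact hZ)
  rw [← this, leadingCoeff, hd, h2, hroots]; rfl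

lemma prodD (a : ℂ) (n : ℕ) (P : ℂ[X])
    (h3 : ∀ z s : ℂ, s ^ 2 = z ^ 2 - 1 → P.eval z = (z + a + s) ^ n + (z + a - s) ^ n - a ^ n)
    (Z : Finset ℂ) (hZ : Z.card = n) (hP : P = C (2 ^ n) * ∏ z ∈ Z, (X - C z)) :
    ∏ z ∈ Z, (1 - C (2 * z) * X + X ^ 2 : ℂ[X]) = (1 + C a * X) ^ n + X ^ n * ((X + C a) ^ n - C (a ^ n)) := by
  apply eq_of_infinite_eval_eq
  apply Set.Infinite.mono (s := {0}ᶜ)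
  swap
  · exact (Set.finite_singleton (0:ℂ)).infinite_compl
  intro w hw
  have hw : w ≠ 0 := hw
  have e := h3 ((w + w⁻¹) / 2) ((w - w⁻¹) / 2) (by field_simp; ring)
  rw [hP, eval_mul, eval_C, eval_prod, ← hZ, ← Finset.prod_const, ← Finset.prod_mul_distrib] at e
  rw [hZ] at e
  simp only [Set.mem_ofPred_eq, eval_prod]
  have e2 : ∀ z ∈ Z, eval w (1 - C (2 * z) * X + X ^ 2 : ℂ[X]) = w * (2 * eval ((w + w⁻¹) / 2) (X - C z)) := by
    intro z _
    simp; field_simp; ring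
  rw [Finset.prod_congr rfl e2, Finset.prod_mul_distrib, e, Finset.prod_const, hZ]
  have e3 : (w + w⁻¹) / 2 + a + (w - w⁻¹) / 2 = w + a := by ring
  have e4 : (w + w⁻¹) / 2 + a - (w - w⁻¹) / 2 = (1 + a * w) / w := by field_simp; ring
  rw [e3, e4, div_pow]
  simp
  field_simp; ring
open Polynomial.Chebyshev MeasureTheory

lemma intE (a : ℝ) (h0 : 0 < a) (h1 : a < 1) (k : ℕ) :
    ∫ x, (T ℝ k).eval x * ((1 + a * x) / (1 + a ^ 2 + 2 * a * x)) ∂measureT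
      = if k = 0 then Real.pi else Real.pi / 2 * (-a) ^ k := by
  set ρ : ℝ → ℝ := fun x => (1 + a * x) / (1 + a ^ 2 + 2 * a * x) with hρ
  have hden : ∀ x ∈ Set.Icc (-1 : ℝ) 1, 0 < 1 + a ^ 2 + 2 * a * x := by
    intro x hx; nlinarith [hx.1, hx.2, mul_nonneg h0.le (by linarith [hx.1] : 0 ≤ x + 1), sq_pos_of_pos (sub_pos.2 h1)]
  have hcont : ContinuousOn ρ (Set.Icc (-1) 1) := by
    apply ContinuousOn.div (by fun_prop) (by fun_prop)
    intro x hx; exact (hden x hx).ne'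
  have hint : ∀ p : ℝ[X], Integrable (fun x => p.eval x * ρ x) measureT := fun p =>
    integrable_measureT (p.continuous.continuousOn.mul hcont)
  have hintp : ∀ p : ℝ[X], Integrable (fun x => p.eval x) measureT := fun p =>
    integrable_measureT (p.continuous.continuousOn)
  have hcongr : ∀ f g : ℝ → ℝ, (∀ x ∈ Set.Icc (-1 : ℝ) 1, f x = g x) → ∫ x, f x ∂measureT = ∫ x, g x ∂measureT := by
    intro f g h
    rw [integral_measureT_eq_integral_cos, integral_measureT_eq_integral_cos]
    congr 1; ext θ; exact h _ (Real.cos_mem_Icc θ)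
  set I : ℕ → ℝ := fun k => ∫ x, (T ℝ k).eval x * ρ x ∂measureT with hI
  -- key identity
  have key : ∀ p : ℝ[X], ∫ x, ((1 + C (a^2) + C (2*a) * X) * p).eval x * ρ x ∂measureT = ∫ x, ((1 + C a * X) * p).eval x ∂measureT := by
    intro p
    apply hcongr
    intro x hx
    have := (hden x hx).ne'
    simp only [hρ, eval_mul, eval_add, eval_one, eval_C, eval_X]
    rw [mul_right_comm, mul_div_cancel₀ _ this]
  have hlin : ∀ (c d e : ℝ) (p q r : ℝ[X]), ∫ x, (C c * p + C d * q + C e * r).eval x * ρ x ∂measureT =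
      c * (∫ x, p.eval x * ρ x ∂measureT) + d * (∫ x, q.eval x * ρ x ∂measureT) + e * (∫ x, r.eval x * ρ x ∂measureT) := by
    intro c d e p q r
    rw [← integral_const_mul, ← integral_const_mul, ← integral_const_mul, ← integral_add, ← integral_add]
    · congr 1; ext x; simp; ring
    · exact ((hint p).const_mul c).add ((hint q).const_mul d)
    · exact (hint r).const_mul e
    · exact (hint p).const_mul c
    · exact (hint q).const_mul d
  have hlin2 : ∀ (c d e : ℝ) (p q r : ℝ[X]), ∫ x, (C c * p + C d * q + C e * r).eval x ∂measureT =
      c * (∫ x, p.eval x ∂measureT) + d * (∫ x, q.eval x ∂measureT) + e * (∫ x, r.eval x ∂measureT) := by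
    intro c d e p q r
    rw [← integral_const_mul, ← integral_const_mul, ← integral_const_mul, ← integral_add, ← integral_add]
    · congr 1; ext x; simp
    · exact ((hintp p).const_mul c).add ((hintp q).const_mul d)
    · exact (hintp r).const_mul e
    · exact (hintp p).const_mul c
    · exact (hintp q).const_mul d
  have hT : ∀ k : ℕ, ∫ x, (T ℝ k).eval x ∂measureT = if k = 0 then Real.pi else 0 := by
    intro k
    split_ifs with h
    · subst h; exact integral_eval_T_real_measureT_zero
    · exact integral_eval_T_real_measureT_of_ne_zero (by exact_mod_cast h)
  have hrec : ∀ k : ℕ, a * I (k + 2) + (1 + a ^ 2) * I (k + 1) + a * I k =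
      a / 2 * (if k = 0 then Real.pi else 0) := by
    intro k
    have e := key (T ℝ (k + 1 : ℕ))
    have t := T_add_two ℝ k
    have tw : (2 : ℝ[X]) = C 2 := rfl
    have t' : C a * (2 * X * T ℝ (k + 1 : ℕ)) = C a * (T ℝ (k + 2 : ℕ) + T ℝ (k : ℕ)) := by
      push_cast; rw [t]; ring
    have t'' : C (a / 2) * (2 * X * T ℝ (k + 1 : ℕ)) = C (a / 2) * (T ℝ (k + 2 : ℕ) + T ℝ (k : ℕ)) := by
      push_cast; rw [t]; ring
    have h2 : C a = C (a / 2) * (2 : ℝ[X]) := by rw [tw, ← Polynomial.C_mul]; congr 1; ring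
    have e1 : (1 + C (a^2) + C (2*a) * X) * T ℝ (k + 1 : ℕ) =
      C a * T ℝ (k + 2 : ℕ) + C (1 + a ^ 2) * T ℝ (k + 1 : ℕ) + C a * T ℝ (k : ℕ) := by
      rw [C_add, Polynomial.C_mul, C_1, ← tw]; linear_combination t'
    have e2 : (1 + C a * X) * T ℝ (k + 1 : ℕ) =
      C (a / 2) * T ℝ (k + 2 : ℕ) + C 1 * T ℝ (k + 1 : ℕ) + C (a / 2) * T ℝ (k : ℕ) := by
      rw [C_1]; linear_combination t'' + h2 * X * T ℝ (k + 1 : ℕ)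
    rw [e1, e2, hlin, hlin2, hT, hT, hT, if_neg (by omega), if_neg (by omega)] at e
    simp only [hI]
    linear_combination e
  have hrec0 : (1 + a ^ 2) * I 0 + 2 * a * I 1 = Real.pi := by
    have e := key (T ℝ (0 : ℕ))
    have e1 : (1 + C (a^2) + C (2*a) * X) * T ℝ (0 : ℕ) =
      C (1 + a ^ 2) * T ℝ (0 : ℕ) + C (2 * a) * T ℝ (1 : ℕ) + C 0 * T ℝ (0 : ℕ) := by
      simp
    have e2 : (1 + C a * X) * T ℝ (0 : ℕ) =
      C 1 * T ℝ (0 : ℕ) + C a * T ℝ (1 : ℕ) + C 0 * T ℝ (0 : ℕ) := by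
      simp
    rw [e1, e2, hlin, hlin2, hT, hT, if_pos rfl, if_neg one_ne_zero] at e
    simp only [hI]
    linear_combination e
  have hbound : ∃ B, ∀ k, |I k| ≤ B := by
    refine ⟨∫ x, |ρ x| ∂measureT, fun k => ?_⟩
    have h1 : Integrable (fun x => |ρ x|) measureT := integrable_measureT hcont.abs
    refine (abs_integral_le_integral_abs).trans ?_
    rw [integral_measureT_eq_integral_cos, integral_measureT_eq_integral_cos]
    have hc : Continuous fun θ => ρ (Real.cos θ) := hcont.comp_continuous Real.continuous_cos (fun θ => Real.cos_mem_Icc θ)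
    apply intervalIntegral.integral_mono_on Real.pi_pos.le
    · apply Continuous.intervalIntegrable
      exact (((T ℝ k).continuous.comp Real.continuous_cos).mul hc).abs
    · exact hc.abs.intervalIntegrable _ _
    · intro θ _
      rw [abs_mul, T_real_cos]
      exact mul_le_of_le_one_left (abs_nonneg _) (Real.abs_cos_le_one _)
  obtain ⟨B, hB⟩ := hbound
  set D : ℕ → ℝ := fun k => I (k + 1) + a * I k with hD
  have hDrec : ∀ k, 1 ≤ k → D k = -a * D (k + 1) := by
    intro k hk
    have := hrec k
    rw [if_neg (by omega)] at this
    simp only [hD]; linear_combination this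
  have hDm : ∀ m k, 1 ≤ k → D k = (-a) ^ m * D (k + m) := by
    intro m
    induction m with
    | zero => intro k _; simp
    | succ m ih => intro k hk; rw [ih k hk, hDrec (k + m) (by omega)]; ring_nf
  have hD0 : ∀ k, 1 ≤ k → D k = 0 := by
    intro k hk
    have hb : ∀ k, |D k| ≤ B + a * B := by
      intro k
      refine (abs_add_le _ _).trans ?_
      rw [abs_mul, abs_of_pos h0]
      gcongr <;> apply hB
    have hlim : Filter.Tendsto (fun m : ℕ => a ^ m * (B + a * B)) Filter.atTop (nhds 0) := by
      simpa using (tendsto_pow_atTop_nhds_zero_of_lt_one h0.le h1).mul_const (B + a * B)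
    have : |D k| ≤ 0 := by
      apply ge_of_tendsto' hlim
      intro m
      rw [hDm m k hk, abs_mul, abs_pow, abs_neg, abs_of_pos h0]
      gcongr; apply hb
    exact abs_eq_zero.1 (le_antisymm this (abs_nonneg _))
  have hr0 := hrec 0
  have hd1 := hD0 1 le_rfl
  simp only [hD] at hd1
  norm_num at hr0 hd1
  have hA : I 1 + a * I 0 = a / 2 * Real.pi := by linear_combination hr0 - a * hd1
  have hI0 : I 0 = Real.pi := by
    have : (1 - a ^ 2) * (I 0 - Real.pi) = 0 := by linear_combination hrec0 - 2 * a * hA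
    rcases mul_eq_zero.1 this with h | h
    · nlinarith
    · linarith
  have hall : ∀ k, I (k + 1) = Real.pi / 2 * (-a) ^ (k + 1) := by
    intro k
    induction k with
    | zero => norm_num; rw [hI0] at hA; linear_combination hA
    | succ k ih =>
      have := hD0 (k + 1) (by omega)
      simp only [hD] at this
      rw [ih] at this
      linear_combination this
  cases k with
  | zero => rw [if_pos rfl]; exact hI0
  | succ k => rw [if_neg (by omega)]; exact hall k

open PowerSeries in
lemma powD (a : ℂ) (n : ℕ) (Z : Finset ℂ)
    (hG : ∏ z ∈ Z, (1 - Polynomial.C (2 * z) * Polynomial.X + Polynomial.X ^ 2 : ℂ[X]) = (1 + Polynomial.C a * Polynomial.X) ^ n + Polynomial.X ^ n * ((Polynomial.X + Polynomial.C a) ^ n - Polynomial.C (a ^ n)))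
    (k : ℕ) (hk : k < n) :
    ∑ z ∈ Z, 2 * (T ℂ (k + 1 : ℕ)).eval z = n * (-a) ^ (k + 1) := by
  let q : ℂ → ℂ⟦X⟧ := fun z => 1 - PowerSeries.C (2 * z) * PowerSeries.X + PowerSeries.X ^ 2
  let L : ℂ → ℂ⟦X⟧ := fun z => PowerSeries.mk fun k => 2 * (T ℂ (k + 1 : ℕ)).eval z
  let M : ℂ⟦X⟧ := PowerSeries.mk fun k => n * (-a) ^ (k + 1)
  let l : ℂ⟦X⟧ := 1 + PowerSeries.C a * PowerSeries.X
  obtain ⟨E, hE⟩ : (Polynomial.X : ℂ[X]) ∣ (Polynomial.X + Polynomial.C a) ^ n - Polynomial.C (a ^ n) := by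
    rw [Polynomial.X_dvd_iff, Polynomial.coeff_zero_eq_eval_zero]; simp
  have hG' : ∏ z ∈ Z, q z = l ^ n + PowerSeries.X ^ (n + 1) * (E : ℂ⟦X⟧) := by
    have := congrArg (Polynomial.coeToPowerSeries.ringHom (R := ℂ)) hG
    rw [hE] at this
    simp only [map_prod, map_add, map_sub, map_mul, map_pow, map_one, Polynomial.coeToPowerSeries.ringHom_apply, Polynomial.coe_C, Polynomial.coe_X] at this
    simp only [q, l]
    simp only [map_mul]
    rw [this]; ring
  have hqL : ∀ z, q z * L z = - derivative ℂ (q z) := by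
    intro z
    have hd : derivative ℂ (q z) = - PowerSeries.C (2 * z) + PowerSeries.C 2 * PowerSeries.X := by
      simp only [q, map_add, map_sub, Derivation.leibniz, Derivation.leibniz_pow, PowerSeries.derivative_C, PowerSeries.derivative_X, Derivation.map_one_eq_zero]
      simp
      exact (map_ofNat (PowerSeries.C (R := ℂ)) 2).symm
    rw [hd]
    simp only [q]
    ext m
    have hX2 : (PowerSeries.X : ℂ⟦X⟧) ^ 2 * L z = PowerSeries.X * (PowerSeries.X * L z) := by ring
    rw [add_mul, sub_mul, one_mul, mul_assoc, hX2]
    rcases m with _ | _ | m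
    · simp [L]
    · simp only [map_add, map_sub, map_neg, PowerSeries.coeff_C_mul, PowerSeries.coeff_succ_X_mul]
      simp [L, PowerSeries.coeff_X, T_two]
      ring
    · simp only [map_add, map_sub, map_neg, PowerSeries.coeff_C_mul, PowerSeries.coeff_succ_X_mul]
      have t := congrArg (Polynomial.eval z) (T_add_two ℂ (m + 1))
      rw [Polynomial.eval_sub, Polynomial.eval_mul, Polynomial.eval_mul, Polynomial.eval_X, Polynomial.eval_ofNat] at t
      rw [show PowerSeries.coeff (m + 1 + 1) (PowerSeries.C (2 * z)) = 0 by rw [PowerSeries.coeff_C, if_neg (by omega)],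
        PowerSeries.coeff_X, if_neg (by omega)]
      simp only [L, PowerSeries.coeff_mk]
      push_cast
      rw [show (m : ℤ) + 1 + 1 + 1 = m + 1 + 2 by ring, t]
      ring
  have hprod : ∀ S : Finset ℂ, (∏ z ∈ S, q z) * ∑ z ∈ S, L z = - derivative ℂ (∏ z ∈ S, q z) := by
    intro S
    induction S using Finset.induction_on with
    | empty => simp
    | insert z S hz ih =>
      rw [Finset.prod_insert hz, Finset.sum_insert hz, Derivation.leibniz, smul_eq_mul, smul_eq_mul]
      linear_combination q z * ih + (∏ z ∈ S, q z) * hqL z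
  have hlM : l * M = - (n * PowerSeries.C a) := by
    ext m
    simp only [l]
    rw [add_mul, one_mul, mul_assoc]
    have hn : (n : ℂ⟦X⟧) = PowerSeries.C (n : ℂ) := by simp
    rw [hn, ← map_mul]
    rcases m with _ | m
    · simp [M]
    · simp only [map_add, map_neg, PowerSeries.coeff_C_mul, PowerSeries.coeff_succ_X_mul]
      rw [PowerSeries.coeff_C, if_neg (by omega)]
      simp only [M, PowerSeries.coeff_mk]
      ring
  have hl0 : l ≠ 0 := by
    intro h
    have := congrArg (PowerSeries.constantCoeff) h
    simp [l] at this
  have hdl : derivative ℂ l = PowerSeries.C a := by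
    simp only [l, map_add, Derivation.leibniz, PowerSeries.derivative_C, PowerSeries.derivative_X, Derivation.map_one_eq_zero]
    simp
  have hH : derivative ℂ (l ^ n) = - (l ^ n * M) := by
    apply mul_left_cancel₀ hl0
    rw [Derivation.leibniz_pow, hdl]
    rcases n with _ | n
    · simp at hk
    simp only [smul_eq_mul, nsmul_eq_mul, Nat.add_sub_cancel]
    linear_combination l ^ (n + 1) * hlM
  have hdvd : (PowerSeries.X : ℂ⟦X⟧) ^ n ∣ (∏ z ∈ Z, q z) * (∑ z ∈ Z, L z - M) := by
    rw [mul_sub, hprod, hG', map_add, hH, Derivation.leibniz, Derivation.leibniz_pow, PowerSeries.derivative_X]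
    simp only [smul_eq_mul, nsmul_eq_mul, Nat.add_sub_cancel]
    refine ⟨-(PowerSeries.X * derivative ℂ (E : ℂ⟦X⟧)) - (E : ℂ⟦X⟧) * ((n + 1 : ℕ) : ℂ⟦X⟧) - PowerSeries.X * (E : ℂ⟦X⟧) * M, ?_⟩
    ring
  have hu : IsUnit (∏ z ∈ Z, q z) := by
    rw [PowerSeries.isUnit_iff_constantCoeff]
    simp [q, map_prod]
  have hdvd2 := (hu.dvd_mul_left).1 hdvd
  have := (PowerSeries.X_pow_dvd_iff.1 hdvd2) k hk
  simpa [L, M, sub_eq_zero] using this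

lemma zerosB (a : ℝ) (h0 : 0 < a) (h1 : a ≤ 1 / 2) (n : ℕ) (hn : 1 ≤ n) :
    ∃ Z : Finset ℂ, Z.card = n ∧ ∀ z ∈ Z, (∃ x : ℝ, x ∈ Set.Icc (-1 : ℝ) 1 ∧ z = x) ∧
      ∃ s : ℂ, s ^ 2 = z ^ 2 - 1 ∧ (z + a + s) ^ n + (z + a - s) ^ n - (a : ℂ) ^ n = 0 := by
  let r : ℝ → ℝ := fun φ => a * Real.cos φ + √(1 - a ^ 2 * Real.sin φ ^ 2)
  have hr1 : ∀ φ, a ≤ r φ := by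
    intro φ
    have hc := Real.neg_one_le_cos φ
    have hc' := Real.cos_le_one φ
    have : a - a * Real.cos φ ≤ √(1 - a ^ 2 * Real.sin φ ^ 2) := by
      apply Real.le_sqrt_of_sq_le
      rw [Real.sin_sq]
      have : a ^ 2 ≤ 1 / 4 := by nlinarith
      nlinarith
    simp only [r]; linarith
  have hrsq : ∀ φ, r φ ^ 2 = 1 - a ^ 2 + 2 * a * r φ * Real.cos φ := by
    intro φ
    have hnn : 0 ≤ 1 - a ^ 2 * Real.sin φ ^ 2 := by
      have : a ^ 2 ≤ 1 / 4 := by nlinarith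
      nlinarith [Real.sin_sq_le_one φ, sq_nonneg (Real.sin φ)]
    have := Real.sq_sqrt hnn
    simp only [r]
    have h2 := Real.sin_sq φ
    rw [h2] at this ⊢
    linear_combination this
  have hrc : Continuous r := by fun_prop
  let x : ℝ → ℝ := fun φ => r φ * Real.cos φ - a
  have hcirc : ∀ φ, x φ ^ 2 + (r φ * Real.sin φ) ^ 2 = 1 := by
    intro φ
    simp only [x]
    linear_combination hrsq φ + r φ ^ 2 * Real.sin_sq_add_cos_sq φ
  let g : ℝ → ℝ := fun φ => 2 * r φ ^ n * Real.cos (n * φ) - a ^ n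
  have hgc : Continuous g := by fun_prop
  have hn0 : (0 : ℝ) < n := by exact_mod_cast hn
  have hex : ∀ k : ℕ, ∃ φ ∈ Set.Ioo (k * Real.pi / n) ((k + 1 : ℕ) * Real.pi / n), g φ = 0 := by
    intro k
    have hle : k * Real.pi / n ≤ (k + 1 : ℕ) * Real.pi / n := by
      have := Real.pi_pos
      gcongr; simp
    have hval : ∀ k : ℕ, g (k * Real.pi / n) = 2 * r (k * Real.pi / n) ^ n * (-1) ^ k - a ^ n := by
      intro k
      simp only [g]
      rw [mul_div_cancel₀ _ hn0.ne', Real.cos_nat_mul_pi]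
    have hpos : ∀ k : ℕ, Even k → 0 < g (k * Real.pi / n) := by
      intro k hk
      rw [hval, hk.neg_one_pow]
      have := pow_le_pow_left₀ h0.le (hr1 (k * Real.pi / n)) n
      have := pow_pos h0 n
      linarith
    have hneg : ∀ k : ℕ, Odd k → g (k * Real.pi / n) < 0 := by
      intro k hk
      rw [hval, hk.neg_one_pow]
      have := pow_le_pow_left₀ h0.le (hr1 (k * Real.pi / n)) n
      have := pow_pos h0 n
      linarith
    rcases Nat.even_or_odd k with hk | hk
    · exact intermediate_value_Ioo' hle hgc.continuousOn ⟨hneg _ hk.add_one, hpos _ hk⟩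
    · exact intermediate_value_Ioo hle hgc.continuousOn ⟨hneg _ hk, hpos _ hk.add_one⟩
  choose φ hφ hgφ using hex
  have hlt : ∀ i j : ℕ, i < j → φ i < φ j := by
    intro i j hij
    have h1 := (hφ i).2
    have h2 := (hφ j).1
    have : ((i + 1 : ℕ) : ℝ) * Real.pi / n ≤ j * Real.pi / n := by
      have := Real.pi_pos
      have : ((i + 1 : ℕ) : ℝ) ≤ j := by exact_mod_cast hij
      gcongr
    linarith
  have hφinj : Function.Injective φ := (strictMono_nat_of_lt_succ fun i => hlt i _ (Nat.lt_succ_self i)).injective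
  have hφmem : ∀ i < n, φ i ∈ Set.Icc 0 Real.pi := by
    intro i hi
    have := Real.pi_pos
    refine ⟨le_trans (by positivity) (hφ i).1.le, (hφ i).2.le.trans ?_⟩
    rw [div_le_iff₀ hn0, mul_comm]
    gcongr
    exact_mod_cast hi
  have hxinj : Set.InjOn x (Set.Icc 0 Real.pi) := by
    intro u hu v hv huv
    have hru : 0 < r u := h0.trans_le (hr1 u)
    have hrv : 0 < r v := h0.trans_le (hr1 v)
    have e1 : r u * Real.cos u = r v * Real.cos v := by
      simp only [x] at huv; linarith
    have e2 : r u ^ 2 = r v ^ 2 := by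
      rw [hrsq, hrsq]; linear_combination 2 * a * e1
    have e3 : r u = r v := (pow_left_inj₀ hru.le hrv.le two_ne_zero).1 e2
    rw [e3] at e1
    exact Real.injOn_cos hu hv (mul_left_cancel₀ hrv.ne' e1)
  refine ⟨(Finset.range n).image fun i => ((x (φ i) : ℝ) : ℂ), ?_, ?_⟩
  · rw [Finset.card_image_of_injOn, Finset.card_range]
    intro i hi j hj hij
    simp only [Finset.coe_range, Set.mem_Iio] at hi hj
    exact hφinj (hxinj (hφmem i hi) (hφmem j hj) (Complex.ofReal_injective hij))
  · intro z hz
    rw [Finset.mem_image] at hz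
    obtain ⟨i, hi, rfl⟩ := hz
    refine ⟨⟨_, ?_, rfl⟩, Complex.I * (r (φ i) * Real.sin (φ i) : ℝ), ?_, ?_⟩
    · rw [Set.mem_Icc, ← abs_le, ← sq_le_one_iff_abs_le_one]
      nlinarith [hcirc (φ i), sq_nonneg (r (φ i) * Real.sin (φ i))]
    · have : ((x (φ i) : ℂ)) ^ 2 + ((r (φ i) * Real.sin (φ i) : ℝ) : ℂ) ^ 2 = 1 := by exact_mod_cast hcirc (φ i)
      rw [mul_pow, Complex.I_sq]; linear_combination -this
    · have h := hgφ i
      simp only [g] at h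
      have h' : (2 * (r (φ i) : ℂ) ^ n * Complex.cos (n * φ i) - (a : ℂ) ^ n) = 0 := by exact_mod_cast h
      have e1 : (x (φ i) : ℂ) + a + Complex.I * (r (φ i) * Real.sin (φ i) : ℝ) = r (φ i) * Complex.exp (φ i * Complex.I) := by
        rw [Complex.exp_mul_I]; simp only [x]; push_cast; ring
      have e2 : (x (φ i) : ℂ) + a - Complex.I * (r (φ i) * Real.sin (φ i) : ℝ) = r (φ i) * Complex.exp (-φ i * Complex.I) := by
        rw [Complex.exp_mul_I, Complex.cos_neg, Complex.sin_neg]; simp only [x]; push_cast; ring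
      rw [e1, e2, mul_pow, mul_pow, ← Complex.exp_nat_mul, ← Complex.exp_nat_mul, ← h']
      have := Complex.two_cos (n * φ i)
      rw [show (n : ℂ) * (φ i * Complex.I) = n * φ i * Complex.I by ring, show (n : ℂ) * (-φ i * Complex.I) = -(n * φ i) * Complex.I by ring]
      linear_combination -(r (φ i) : ℂ) ^ n * this


/-- Let `α ∈ (0, 1/4]`. For each `n ≥ 1`, the function
`p_n(z) = (z + 2α + s)ⁿ + (z + 2α − s)ⁿ − (2α)ⁿ` (`s² = z² − 1`, value independent of the
choice) has exactly `n` zeros `z_1, …, z_n`; they are pairwise distinct, lie in `[−1, 1]`,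
and are Chebyshev quadrature nodes of order `n` for Ullman's measure
`dμ(x) = (1/π)·(1/√(1 − x²))·(1 + 2αx)/(1 + 4α² + 4αx) dx` on `[−1,1]`: for every
polynomial `p` of degree at most `n`, `∫_{−1}^1 p dμ = (1/n) Σ_j p(z_j)`. -/
theorem stmt_19 (α : ℝ) (hα : 0 < α) (hα' : α ≤ 1/4) (n : ℕ) (hn : 1 ≤ n) :
    ∃ Z : Finset ℂ, Z.card = n ∧
      (∀ z : ℂ, z ∈ Z ↔ ∀ s : ℂ, s ^ 2 = z ^ 2 - 1 →
        (z + 2 * (α : ℂ) + s) ^ n + (z + 2 * (α : ℂ) - s) ^ n - (2 * (α : ℂ)) ^ n = 0) ∧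
      (∀ z ∈ Z, ∃ x : ℝ, x ∈ Set.Icc (-1 : ℝ) 1 ∧ z = (x : ℂ)) ∧
      (∀ p : Polynomial ℂ, p.degree ≤ n →
        (1 / (Real.pi : ℂ)) *
          ∫ x in (-1 : ℝ)..1,
            p.eval (x : ℂ) *
              (((1 / Real.sqrt (1 - x ^ 2)) *
                ((1 + 2 * α * x) / (1 + 4 * α ^ 2 + 4 * α * x)) : ℝ) : ℂ) =
        (1 / (n : ℂ)) * ∑ z ∈ Z, p.eval z) := by
  have h2a : (0 : ℝ) < 2 * α := by linarith
  have h2a' : 2 * α ≤ 1 / 2 := by linarith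
  obtain ⟨Z, hcard, hZ⟩ := zerosB (2 * α) h2a h2a' n hn
  have hcast : ((2 * α : ℝ) : ℂ) = 2 * (α : ℂ) := by push_cast; rfl
  simp only [hcast] at hZ
  obtain ⟨P, hP1, hP2, hP3⟩ := polyB (2 * (α : ℂ)) n hn
  have hroot : ∀ z ∈ Z, P.eval z = 0 := by
    intro z hz
    obtain ⟨_, s, hs, h⟩ := hZ z hz
    rw [hP3 z s hs]; exact h
  have hPp := polyC n P hP1 hP2 Z hcard hroot
  have hprod := prodD _ n P hP3 Z hcard hPp
  have hsum := powD _ n Z hprod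
  refine ⟨Z, hcard, ?_, fun z hz => (hZ z hz).1, ?_⟩
  · intro z
    constructor
    · intro hz s hs
      rw [← hP3 z s hs]; exact hroot z hz
    · intro h
      obtain ⟨s, hs⟩ := IsAlgClosed.exists_pow_nat_eq (z ^ 2 - 1) (n := 2) two_pos
      have e := h s hs
      rw [← hP3 z s hs, hPp, eval_mul, eval_C, eval_prod] at e
      rcases mul_eq_zero.1 e with e | e
      · exact absurd e (pow_ne_zero _ two_ne_zero)
      · obtain ⟨y, hy, hyz⟩ := Finset.prod_eq_zero_iff.1 e
        have : z = y := by simpa [sub_eq_zero] using hyz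
        rwa [this]
  · intro p hp
    have hn0 : (n : ℂ) ≠ 0 := by exact_mod_cast (by omega : n ≠ 0)
    have hpi : (Real.pi : ℂ) ≠ 0 := by exact_mod_cast Real.pi_ne_zero
    have hmem : p ∈ degreeLT ℂ (n + 1) := by
      rw [mem_degreeLT]; exact lt_of_le_of_lt hp (by exact_mod_cast Nat.lt_succ_self n)
    rw [← Sequence.span_degreeLT (chebyshevTsequence ℂ) (by simp),
      show Set.Iio (n + 1) = Finset.range (n + 1) by simp,
      Submodule.mem_span_image_finset_iff_exists_fun'] at hmem
    obtain ⟨c, rfl⟩ := hmem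
    set W : ℝ → ℝ := fun x => (1 / Real.sqrt (1 - x ^ 2)) *
                ((1 + 2 * α * x) / (1 + 4 * α ^ 2 + 4 * α * x)) with hW
    have hWeq : ∀ (k : ℕ) (x : ℝ), (T ℝ k).eval x * W x = ((T ℝ k).eval x * ((1 + (2 * α) * x) / (1 + (2 * α) ^ 2 + 2 * (2 * α) * x))) * √(1 - x ^ 2)⁻¹ := by
      intro k x
      simp only [hW]
      rw [Real.sqrt_inv, one_div]; ring_nf
    have hWint : ∀ k : ℕ, IntervalIntegrable (fun x => (T ℝ k).eval x * W x) volume (-1) 1 := by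
      intro k
      simp only [hWeq]
      apply intervalIntegrable_sqrt_one_sub_sq_inv.continuousOn_mul
      rw [Set.uIcc_of_le (by norm_num)]
      apply (T ℝ k).continuous.continuousOn.mul
      apply ContinuousOn.div (by fun_prop) (by fun_prop)
      intro x hx
      have : 0 < 1 + (2 * α) ^ 2 + 2 * (2 * α) * x := by nlinarith [hx.1, hx.2]
      exact this.ne'
    have hI : ∀ k : ℕ, ∫ x in (-1 : ℝ)..1, (T ℝ k).eval x * W x = if k = 0 then Real.pi else Real.pi / 2 * (-(2 * α)) ^ k := by
      intro k
      rw [← intE (2 * α) h2a (by linarith) k, integral_measureT]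
      simp only [hWeq]
    have hTc : ∀ (k : ℕ) (x : ℝ), (T ℂ k).eval (x : ℂ) = (((T ℝ k).eval x : ℝ) : ℂ) := by
      intro k x
      simp
    have hseq : ∀ k, (chebyshevTsequence ℂ) k = T ℂ k := fun k => rfl
    have hmain : ∀ k < n + 1, (1 / (Real.pi : ℂ)) * (((∫ x in (-1 : ℝ)..1, (T ℝ k).eval x * W x) : ℝ) : ℂ) = (1 / (n : ℂ)) * ∑ z ∈ Z, (T ℂ k).eval z := by
      intro k hk
      rw [hI]
      rcases k with _ | k
      · simp [hcard, hn0, hpi]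
      · have := hsum k (by omega)
        rw [← Finset.mul_sum] at this
        rw [if_neg (by omega)]
        push_cast at this ⊢
        field_simp
        linear_combination -this
    simp only [eval_finsetSum, eval_smul, hseq, smul_eq_mul, hTc, Finset.sum_mul]
    rw [intervalIntegral.integral_finsetSum]
    · rw [Finset.sum_comm, Finset.mul_sum, Finset.mul_sum]
      apply Finset.sum_congr rfl
      intro k hk
      have e := hmain k (Finset.mem_range.1 hk)
      rw [← intervalIntegral.integral_ofReal] at e
      simp only [mul_assoc]
      rw [intervalIntegral.integral_const_mul, ← Finset.mul_sum]
      have e' : (∫ x in (-1 : ℝ)..1, (((T ℝ k).eval x : ℝ) : ℂ) * ((1 / Real.sqrt (1 - x ^ 2) *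
                ((1 + 2 * α * x) / (1 + 4 * α ^ 2 + 4 * α * x)) : ℝ) : ℂ)) = ∫ x in (-1 : ℝ)..1, (((T ℝ k).eval x * W x : ℝ) : ℂ) := by
        congr 1; ext x; exact (Complex.ofReal_mul _ (W x)).symm
      simp only [mul_assoc] at e' e
      rw [e']
      linear_combination c k * e
    · intro k hk
      have h : IntervalIntegrable (fun x => (((T ℝ k).eval x * W x : ℝ) : ℂ)) volume (-1) 1 :=
        ⟨(hWint k).1.ofReal, (hWint k).2.ofReal⟩
      have := h.const_mul (c k)
      simp only [Complex.ofReal_mul _ (W _), ← mul_assoc] at this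
      exact this
end
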